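/- (Lemma 5) Fix an ordering S of the N items. Let f, f' : ℕ → [0,1] and u, u' ∈ [0,1]^N satisfy f(r) ≤ f'(r) for every r ∈ ℕ and u_i ≤ u'_i for every item i. Then the expected reward of S computed with discount f' and relevances u' is at least the expected reward of S computed with discount f and relevances u: E[R(S, f', u')] ≥ E[R(S, f, u)]. -/

import Mathlib

/-- Expected reward `R_{g,q}` of a list of attractiveness values. -/
def reward (g q : ℝ) : List ℝ → ℝ
  | [] => 0
  | z :: rest => z + ((g - q) * z + q) * reward g q rest

/-- Auxiliary: attractiveness values of the items in `S`, given that the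
items in `prev` have already been shown. -/
def attrAux {N K : ℕ} (f : ℕ → ℝ) (u : Fin N → ℝ) (C : Fin N → Fin K) :
    List (Fin N) → List (Fin N) → List ℝ
  | _, [] => []
  | prev, i :: rest =>
      f (prev.countP (fun j => decide (C j = C i))) * u i ::
        attrAux f u C (prev ++ [i]) rest

/-- The list of attractiveness values `z_{S_1}(S), …, z_{S_N}(S)` of an ordering `S`. -/
def attrList {N K : ℕ} (f : ℕ → ℝ) (u : Fin N → ℝ) (C : Fin N → Fin K)
    (S : List (Fin N)) : List ℝ :=
  attrAux f u C [] S

section Reward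

variable {g q : ℝ} {l l' : List ℝ}

theorem reward_nonneg (hq : 0 ≤ q) (hqg : q ≤ g) (hl : ∀ z ∈ l, 0 ≤ z) : 0 ≤ reward g q l := by
  induction l with
  | nil => exact le_rfl
  | cons z l ih =>
    obtain ⟨hz, hl⟩ := List.forall_mem_cons.1 hl
    have hcoeff : 0 ≤ (g - q) * z + q := add_nonneg (mul_nonneg (sub_nonneg.2 hqg) hz) hq
    exact add_nonneg hz (mul_nonneg hcoeff (ih hl))

theorem reward_le_reward (hq : 0 ≤ q) (hqg : q ≤ g) (hl : ∀ z ∈ l, 0 ≤ z)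
    (hll' : List.Forall₂ (· ≤ ·) l l') : reward g q l ≤ reward g q l' := by
  induction hll' with
  | nil => exact le_rfl
  | @cons z z' l l' hzz' _ ih =>
    obtain ⟨hz, hl⟩ := List.forall_mem_cons.1 hl
    have hgq : 0 ≤ g - q := sub_nonneg.2 hqg
    have hreward : 0 ≤ reward g q l := reward_nonneg hq hqg hl
    have hcoeff' : 0 ≤ (g - q) * z' + q := add_nonneg (mul_nonneg hgq (hz.trans hzz')) hq
    calc z + ((g - q) * z + q) * reward g q l
        ≤ z' + ((g - q) * z' + q) * reward g q l := by gcongr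
      _ ≤ z' + ((g - q) * z' + q) * reward g q l' := by gcongr; exact ih hl

end Reward

section Attractiveness

variable {N K : ℕ} {f f' : ℕ → ℝ} {u u' : Fin N → ℝ}

theorem forall_mem_attrAux {P : ℝ → Prop} (h : ∀ r i, P (f r * u i)) (C : Fin N → Fin K)
    (prev S : List (Fin N)) : ∀ z ∈ attrAux f u C prev S, P z := by
  induction S generalizing prev with
  | nil => exact List.forall_mem_nil P
  | cons i S ih => exact List.forall_mem_cons.2 ⟨h _ i, ih (prev ++ [i])⟩

-- The counts `h_i(S)` depend only on `C` and the ordering, so both lists are compared at equal `r`.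
theorem forall₂_attrAux {R : ℝ → ℝ → Prop} (h : ∀ r i, R (f r * u i) (f' r * u' i))
    (C : Fin N → Fin K) (prev S : List (Fin N)) :
    List.Forall₂ R (attrAux f u C prev S) (attrAux f' u' C prev S) := by
  induction S generalizing prev with
  | nil => exact .nil
  | cons i S ih => exact .cons (h _ i) (ih (prev ++ [i]))

theorem attrList_nonneg (hf : ∀ r, 0 ≤ f r) (hu : ∀ i, 0 ≤ u i) (C : Fin N → Fin K)
    (S : List (Fin N)) : ∀ z ∈ attrList f u C S, 0 ≤ z :=
  forall_mem_attrAux (fun r i => mul_nonneg (hf r) (hu i)) C [] S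

theorem forall₂_attrList_le (hf : ∀ r, 0 ≤ f r) (hff' : ∀ r, f r ≤ f' r) (hu : ∀ i, 0 ≤ u i)
    (huu' : ∀ i, u i ≤ u' i) (C : Fin N → Fin K) (S : List (Fin N)) :
    List.Forall₂ (· ≤ ·) (attrList f u C S) (attrList f' u' C S) :=
  forall₂_attrAux
    (fun r i => mul_le_mul (hff' r) (huu' i) (hu i) ((hf r).trans (hff' r))) C [] S

end Attractiveness

theorem reward_mono_in_f_u_general {N K : ℕ} {g q : ℝ} (hq : 0 ≤ q) (hqg : q ≤ g)
    (C : Fin N → Fin K) {f f' : ℕ → ℝ} (hf : ∀ r, 0 ≤ f r) (hff' : ∀ r, f r ≤ f' r)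
    {u u' : Fin N → ℝ} (hu : ∀ i, 0 ≤ u i) (huu' : ∀ i, u i ≤ u' i) (S : List (Fin N)) :
    reward g q (attrList f u C S) ≤ reward g q (attrList f' u' C S) :=
  reward_le_reward hq hqg (attrList_nonneg hf hu C S) (forall₂_attrList_le hf hff' hu huu' C S)

/-- Lemma 5: for a fixed ordering `S`, the expected reward is monotone nondecreasing
jointly in the discount function and the vector of intrinsic relevances. -/
theorem reward_mono_in_f_u {N K : ℕ} (g q : ℝ) (hq0 : 0 ≤ q) (hqg : q ≤ g) (hg1 : g ≤ 1)
    (C : Fin N → Fin K)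
    (f f' : ℕ → ℝ) (hf : ∀ r, 0 ≤ f r) (hf' : ∀ r, f' r ≤ 1)
    (hff' : ∀ r, f r ≤ f' r)
    (u u' : Fin N → ℝ) (hu : ∀ i, 0 ≤ u i) (hu' : ∀ i, u' i ≤ 1)
    (huu' : ∀ i, u i ≤ u' i)
    (S : List (Fin N)) (hS : S.Perm (List.finRange N)) :
    reward g q (attrList f u C S) ≤ reward g q (attrList f' u' C S) :=
  reward_mono_in_f_u_general hq0 hqg C hf hff' hu huu' S
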